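/- arXiv:2308.09338 — 2 statements merged into one kernel-verified Lean document; each statement's English description precedes it below -/
import Mathlib

section
/- Let n ≥ 1 be an integer, δ > 0, μ and λ* real numbers, and β = n+2, so that a = (n+2-β)/2 = 0 and b = (n+2)/2. Then for every r ≥ 0 and z = δr/2, the hypergeometric series ₂F₃(1, a; 2, b+1, a+1; -z²), ₃F₄(1, 5/2, a; 2, 3/2, b+1, a+1; -z²), and ₁F₂(a; b, a+1; -z²) all equal 1 (since (0)_k = 0 for k ≥ 1), and consequently λ₂(r) = -μ r² and λ₁(r) = λ_{1,1}(r) + λ_{1,2}(r) = -3μ r² - (λ* - μ) r² = -(λ* + 2μ) r², i.e., at β = n+2 the peridynamic eigenvalues coincide with the eigenvalues of the Navier operator of linear elasticity. -/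
/-!
At `β = n + 2` the upper parameter `a` is `0`, and `(0)_k = 0` for every `k ≥ 1`. Each of the three
series therefore reduces to its `k = 0` term, which is `1`, whatever the other parameters and the
argument are. The eigenvalue identities are then arithmetic:
`-3μr² - (λ* - μ)r² = -(λ* + 2μ)r²`.
-/

open Filter Real

/-- Rising factorial (Pochhammer symbol) `(a)_k = a(a+1)⋯(a+k-1)`. -/
noncomputable def risingFactorial (a : ℝ) (k : ℕ) : ℝ :=
  ∏ i ∈ Finset.range k, (a + i)

/-- Generalized hypergeometric function `₁F₂(a₁; b₁, b₂; x)`. -/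
noncomputable def hyp1F2 (a1 b1 b2 x : ℝ) : ℝ :=
  ∑' k : ℕ, risingFactorial a1 k /
    (risingFactorial b1 k * risingFactorial b2 k) * x ^ k / (Nat.factorial k)

/-- Generalized hypergeometric function `₂F₃(a₁, a₂; b₁, b₂, b₃; x)`. -/
noncomputable def hyp2F3 (a1 a2 b1 b2 b3 x : ℝ) : ℝ :=
  ∑' k : ℕ, (risingFactorial a1 k * risingFactorial a2 k) /
    (risingFactorial b1 k * risingFactorial b2 k * risingFactorial b3 k) *
    x ^ k / (Nat.factorial k)

/-- Generalized hypergeometric function `₃F₄(a₁, a₂, a₃; b₁, b₂, b₃, b₄; x)`. -/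
noncomputable def hyp3F4 (a1 a2 a3 b1 b2 b3 b4 x : ℝ) : ℝ :=
  ∑' k : ℕ, (risingFactorial a1 k * risingFactorial a2 k * risingFactorial a3 k) /
    (risingFactorial b1 k * risingFactorial b2 k * risingFactorial b3 k *
      risingFactorial b4 k) * x ^ k / (Nat.factorial k)

/-- The digamma function `ψ(x) = Γ'(x)/Γ(x)`. -/
noncomputable def digamma (x : ℝ) : ℝ := deriv Real.Gamma x / Real.Gamma x

theorem risingFactorial_zero_right (a : ℝ) : risingFactorial a 0 = 1 := by
  simp [risingFactorial]

/-- The rising factorial `(0)_k` contains the factor `0 + 0` as soon as `k ≥ 1`; this is what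
truncates the hypergeometric series to their constant term. -/
theorem risingFactorial_zero_left {k : ℕ} (hk : k ≠ 0) : risingFactorial 0 k = 0 :=
  Finset.prod_eq_zero (Finset.mem_range.2 (Nat.pos_of_ne_zero hk)) (by simp)

theorem hyp1F2_zero (b1 b2 x : ℝ) : hyp1F2 0 b1 b2 x = 1 := by
  unfold hyp1F2
  rw [tsum_eq_single 0 fun k hk => by simp [risingFactorial_zero_left hk]]
  simp [risingFactorial_zero_right]

theorem hyp2F3_zero (a1 b1 b2 b3 x : ℝ) : hyp2F3 a1 0 b1 b2 b3 x = 1 := by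
  unfold hyp2F3
  rw [tsum_eq_single 0 fun k hk => by simp [risingFactorial_zero_left hk]]
  simp [risingFactorial_zero_right]

theorem hyp3F4_zero (a1 a2 b1 b2 b3 b4 x : ℝ) : hyp3F4 a1 a2 0 b1 b2 b3 b4 x = 1 := by
  unfold hyp3F4
  rw [tsum_eq_single 0 fun k hk => by simp [risingFactorial_zero_left hk]]
  simp [risingFactorial_zero_right]

/-- At β = n+2 (so a = 0) the hypergeometric series all equal 1 and the
peridynamic eigenvalues coincide with the Navier eigenvalues -μr² and -(λ*+2μ)r². -/
theorem eigenvalues_at_beta_eq_n_add_two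
    (n : ℕ) (hn : 1 ≤ n) (δ μ lamStar β : ℝ) (hδ : 0 < δ)
    (hβ : β = (n : ℝ) + 2)
    (a b : ℝ) (ha : a = ((n : ℝ) + 2 - β) / 2) (hb : b = ((n : ℝ) + 2) / 2) :
    ∀ r : ℝ, 0 ≤ r →
      hyp2F3 1 a 2 (b + 1) (a + 1) (-(δ * r / 2) ^ 2) = 1 ∧
      hyp3F4 1 (5 / 2) a 2 (3 / 2) (b + 1) (a + 1) (-(δ * r / 2) ^ 2) = 1 ∧
      hyp1F2 a b (a + 1) (-(δ * r / 2) ^ 2) = 1 ∧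
      -μ * r ^ 2 * hyp2F3 1 a 2 (b + 1) (a + 1) (-(δ * r / 2) ^ 2) = -μ * r ^ 2 ∧
      -3 * μ * r ^ 2 *
          hyp3F4 1 (5 / 2) a 2 (3 / 2) (b + 1) (a + 1) (-(δ * r / 2) ^ 2) -
        r ^ 2 * (lamStar - μ) * (hyp1F2 a b (a + 1) (-(δ * r / 2) ^ 2)) ^ 2 =
        -(lamStar + 2 * μ) * r ^ 2 := by
  intro r _
  obtain rfl : a = 0 := by rw [ha, hβ]; simp
  rw [hyp2F3_zero, hyp3F4_zero, hyp1F2_zero]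
  refine ⟨rfl, rfl, rfl, ?_, ?_⟩ <;> ring
end

section
/- Let b > 0 and z > 0, and define h(s) = (3/2 + s) · Γ(-s) · z^(2s) / Γ(b+1+s) for real s in a neighborhood of s = -1. Then h is differentiable at s = -1 and h'(-1) = (2 log z - ψ(b) - ψ(1) + 2) · z^(-2) / (2Γ(b)) = (2 log z - ψ(b) + γ + 2) · z^(-2) / (2Γ(b)), where ψ(x) = Γ'(x)/Γ(x) is the digamma function, γ is the Euler–Mascheroni constant, and ψ(1) = -γ. -/
/-!
The function is a product of four factors that are differentiable and nonzero at `s = -1`, so its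
derivative there is its value `z⁻² / (2 Γ(b))` times the sum of the logarithmic derivatives
`2`, `-ψ(1)`, `2 log z` and `-ψ(b)`. The value `ψ(1) = -γ` is
`Real.eulerMascheroniConstant_eq_neg_deriv`, since `Γ(1) = 1`.
-/

open Filter Real

theorem digamma_one_eq : digamma 1 = -Real.eulerMascheroniConstant := by
  rw [digamma, Real.eulerMascheroniConstant_eq_neg_deriv, Real.Gamma_one]
  ring

theorem hasDerivAt_Gamma_of_pos {x : ℝ} (hx : 0 < x) :
    HasDerivAt Real.Gamma (deriv Real.Gamma x) x := by
  refine (Real.differentiableAt_Gamma fun m => ?_).hasDerivAt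
  have : (0 : ℝ) ≤ m := m.cast_nonneg
  linarith

/-- Derivative at the double pole s = -1 for the β = n case of λ_{1,1}:
d/ds [(3/2+s)Γ(-s)z^(2s)/Γ(b+1+s)] at s = -1 equals
(2 log z - ψ(b) - ψ(1) + 2)z⁻²/(2Γ(b)). -/
theorem double_pole_derivative_3F4
    (b z : ℝ) (hb : 0 < b) (hz : 0 < z) :
    HasDerivAt
      (fun s : ℝ => (3 / 2 + s) * Real.Gamma (-s) * z ^ (2 * s) / Real.Gamma (b + 1 + s))
      ((2 * Real.log z - digamma b - digamma 1 + 2) * z ^ (-2 : ℤ) / (2 * Real.Gamma b))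
      (-1) ∧
    (2 * Real.log z - digamma b - digamma 1 + 2) * z ^ (-2 : ℤ) / (2 * Real.Gamma b) =
      (2 * Real.log z - digamma b + Real.eulerMascheroniConstant + 2) * z ^ (-2 : ℤ) /
        (2 * Real.Gamma b) ∧
    digamma 1 = -Real.eulerMascheroniConstant := by
  refine ⟨?_, by rw [digamma_one_eq, sub_neg_eq_add], digamma_one_eq⟩
  have hG : Real.Gamma b ≠ 0 := (Real.Gamma_pos_of_pos hb).ne'
  have hz0 : z ≠ 0 := hz.ne'
  have h1 : HasDerivAt (fun s : ℝ => 3 / 2 + s) 1 (-1) := (hasDerivAt_id (-1 : ℝ)).const_add _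
  have h2 : HasDerivAt (fun s : ℝ => Real.Gamma (-s)) (deriv Real.Gamma 1 * (-1)) (-1) := by
    have hΓ : HasDerivAt Real.Gamma (deriv Real.Gamma 1) (-(-1)) := by
      rw [neg_neg]
      exact hasDerivAt_Gamma_of_pos one_pos
    exact hΓ.comp (-1) (hasDerivAt_neg (-1))
  have h3 : HasDerivAt (fun s : ℝ => z ^ (2 * s))
      (Real.log z * (2 * 1) * z ^ (2 * (-1) : ℝ)) (-1) :=
    ((hasDerivAt_id (-1 : ℝ)).const_mul 2).const_rpow hz
  have eb : b + 1 + (-1 : ℝ) = b := by ring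
  have h4 : HasDerivAt (fun s : ℝ => Real.Gamma (b + 1 + s)) (deriv Real.Gamma b) (-1) := by
    refine HasDerivAt.comp_const_add (b + 1) (-1) ?_
    rw [eb]
    exact hasDerivAt_Gamma_of_pos hb
  -- The real exponent `2 * (-1)` and the integer exponent `-2` give the same power of `z`.
  have ez : z ^ (2 * (-1) : ℝ) = z ^ (-2 : ℤ) := by
    rw [← Real.rpow_intCast]
    norm_num
  refine (((h1.mul h2).mul h3).div h4 (by rwa [eb])).congr_deriv ?_
  simp only [Pi.mul_apply, eb, ez, neg_neg, Real.Gamma_one, digamma]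
  generalize z ^ (-2 : ℤ) = w
  field_simp
  ring
end
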